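/- Let f : ℂⁿ → ℂ be a mixed polynomial with supp(f) ≠ ∅ that is radial weighted-homogeneous and Newton strongly non-degenerate. Then S(f) ∪ f(Sing f) ⊆ {0}. -/

import Mathlib

open Complex Filter Finset

noncomputable section

abbrev MixedCoeff (n : ℕ) := ((Fin n → ℕ) × (Fin n → ℕ)) →₀ ℂ

namespace Mixed

variable {n : ℕ}

/-- Evaluation of a mixed polynomial given by its coefficient function `c`:
`f(z) = Σ c(ν,μ) zᵛ z̄ᵘ`. -/
def eval (c : MixedCoeff n) (z : Fin n → ℂ) : ℂ :=
  c.sum fun p a => a * (∏ i, z i ^ p.1 i) * ∏ i, (starRingEnd ℂ) (z i) ^ p.2 i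

/-- `∂f/∂z_i` evaluated at `(z, z̄)`. -/
def dz (c : MixedCoeff n) (i : Fin n) (z : Fin n → ℂ) : ℂ :=
  c.sum fun p a => a * (p.1 i) * (∏ j, z j ^ (p.1 j - if j = i then 1 else 0)) *
    ∏ j, (starRingEnd ℂ) (z j) ^ p.2 j

/-- `∂f/∂z̄_i` evaluated at `(z, z̄)`. -/
def dzbar (c : MixedCoeff n) (i : Fin n) (z : Fin n → ℂ) : ℂ :=
  c.sum fun p a => a * (p.2 i) * (∏ j, z j ^ p.1 j) *
    ∏ j, (starRingEnd ℂ) (z j) ^ (p.2 j - if j = i then 1 else 0)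

/-- The singular locus of `f` as a real map `ℝ²ⁿ → ℝ²`. -/
def Sing (c : MixedCoeff n) : Set (Fin n → ℂ) :=
  {z | ¬ Function.Surjective ⇑(fderiv ℝ (eval c) z)}

/-- The Milnor set `M(f)`. -/
def Milnor (c : MixedCoeff n) : Set (Fin n → ℂ) :=
  {z | ∃ (l : ℝ) (m : ℂ), m ≠ 0 ∧
    ∀ i, (l : ℂ) * z i = m * (starRingEnd ℂ) (dz c i z) + (starRingEnd ℂ) m * dzbar c i z}

/-- The set `S(f)` of asymptotic ρ-nonregular values. -/
def Sset (c : MixedCoeff n) : Set ℂ :=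
  {v | ∃ zk : ℕ → (Fin n → ℂ), (∀ k, zk k ∈ Milnor c) ∧
    Tendsto (fun k => ‖zk k‖) atTop atTop ∧
    Tendsto (fun k => eval c (zk k)) atTop (nhds v)}

/-- The point of `ℝⁿ` attached to the exponent pair `(ν,μ)`, namely `ν+μ`. -/
def suppPt (p : (Fin n → ℕ) × (Fin n → ℕ)) : Fin n → ℝ := fun i => ((p.1 i + p.2 i : ℕ) : ℝ)

/-- The support of `f`, as a subset of `ℝⁿ`. -/
def suppPts (c : MixedCoeff n) : Set (Fin n → ℝ) := suppPt '' (c.support : Set _)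

/-- The Newton polyhedron `Γ₀(f)`: convex hull of `{0} ∪ supp(f)`. -/
def Gamma0 (c : MixedCoeff n) : Set (Fin n → ℝ) := convexHull ℝ (insert 0 (suppPts c))

/-- `supp(f)‾`: the convex hull of `supp(f) \ {0}`. -/
def suppBar (c : MixedCoeff n) : Set (Fin n → ℝ) := convexHull ℝ (suppPts c \ {0})

/-- `F` is a face of the (compact convex) set `C`: either `C` itself or the set of
minimizers on `C` of a linear functional, and nonempty. -/
def IsFaceOf (C F : Set (Fin n → ℝ)) : Prop :=
  F.Nonempty ∧ (F = C ∨ ∃ a : Fin n → ℝ,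
    F = {x ∈ C | ∀ y ∈ C, ∑ i, a i * x i ≤ ∑ i, a i * y i})

/-- `Δ` is a face of the Newton boundary at infinity `Γ⁺(f)`: a face of `Γ₀(f)` not
containing the origin. -/
def IsGammaPlusFace (c : MixedCoeff n) (Δ : Set (Fin n → ℝ)) : Prop :=
  IsFaceOf (Gamma0 c) Δ ∧ (0 : Fin n → ℝ) ∉ Δ

/-- `Γ⁺(f)` as a subset of `ℝⁿ`: the union of the faces of `Γ₀(f)` not containing `0`. -/
def GammaPlusSet (c : MixedCoeff n) : Set (Fin n → ℝ) :=
  {x | ∃ Δ, IsGammaPlusFace c Δ ∧ x ∈ Δ}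

/-- The truncation `f_Δ` of `f` to a subset `Δ ⊆ ℝⁿ`. -/
def trunc (c : MixedCoeff n) (Δ : Set (Fin n → ℝ)) : MixedCoeff n :=
  @Finsupp.filter _ _ _ (fun p => suppPt p ∈ Δ) (Classical.decPred _) c

/-- Newton non-degeneracy: for every face `Δ` of `Γ⁺(f)`,
`Sing f_Δ ∩ f_Δ⁻¹(0) ∩ (ℂ*)ⁿ = ∅`. -/
def NewtonNonDeg (c : MixedCoeff n) : Prop :=
  ∀ Δ, IsGammaPlusFace c Δ → ∀ z : Fin n → ℂ, (∀ i, z i ≠ 0) →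
    eval (trunc c Δ) z = 0 → z ∉ Sing (trunc c Δ)

/-- Newton strong non-degeneracy: for every face `Δ` of `Γ⁺(f)`,
`Sing f_Δ ∩ (ℂ*)ⁿ = ∅`. -/
def NewtonStronglyNonDeg (c : MixedCoeff n) : Prop :=
  ∀ Δ, IsGammaPlusFace c Δ → ∀ z : Fin n → ℂ, (∀ i, z i ≠ 0) →
    z ∉ Sing (trunc c Δ)

/-- `Δ` is a bad face of `supp(f)‾`. -/
def IsBadFace (c : MixedCoeff n) (Δ : Set (Fin n → ℝ)) : Prop :=
  IsFaceOf (suppBar c) Δ ∧ (0 : Fin n → ℝ) ∈ affineSpan ℝ Δ ∧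
    ∃ a : Fin n → ℝ, (∃ i, a i < 0) ∧ (∃ j, 0 < a j) ∧
      {x ∈ suppBar c | ∑ i, a i * x i = 0} = Δ

/-- `f` depends effectively on all its variables. -/
def EffectiveAll (c : MixedCoeff n) : Prop :=
  ∀ i, ∃ p ∈ c.support, 0 < p.1 i + p.2 i

/-- The Euclidean norm on `ℂⁿ`. -/
def norm2 (v : Fin n → ℂ) : ℝ := Real.sqrt (∑ i, Complex.normSq (v i))

end Mixed

/-- `f` is radial weighted-homogeneous of some degree `m` with positive weights `q`,
`gcd(q₁,…,qₙ) = 1`. -/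
def RadialWeightedHom {n : ℕ} (c : MixedCoeff n) : Prop :=
  ∃ (q : Fin n → ℕ) (m : ℕ), (∀ i, 0 < q i) ∧ Finset.univ.gcd q = 1 ∧ 0 < m ∧
    ∀ p ∈ c.support, ∑ i, q i * (p.1 i + p.2 i) = m

namespace Mixed

variable {n : ℕ}

/-- the term of index `p` -/
def T (c : MixedCoeff n) (p : (Fin n → ℕ) × (Fin n → ℕ)) (z : Fin n → ℂ) : ℂ :=
  c p * (∏ i, z i ^ p.1 i) * ∏ i, (starRingEnd ℂ) (z i) ^ p.2 i

/-- the logarithmic gradient contribution of the term `p` -/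
def Q (c : MixedCoeff n) (m : ℂ) (p : (Fin n → ℕ) × (Fin n → ℕ)) (z : Fin n → ℂ) (i : Fin n) : ℂ :=
  (p.1 i : ℂ) * (m * (starRingEnd ℂ) (T c p z)) + (p.2 i : ℂ) * ((starRingEnd ℂ) m * T c p z)

lemma eval_eq (c : MixedCoeff n) (z : Fin n → ℂ) : eval c z = ∑ p ∈ c.support, T c p z := rfl

lemma prod_sub (z : Fin n → ℂ) (e : Fin n → ℕ) (i : Fin n) :
    (∏ j, z j ^ (e j - if j = i then 1 else 0)) =
      (∏ j ∈ univ.erase i, z j ^ e j) * z i ^ (e i - 1) := by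
  rw [← Finset.prod_erase_mul _ _ (Finset.mem_univ i)]
  congr 1
  · apply Finset.prod_congr rfl
    intro j hj
    simp [Finset.ne_of_mem_erase hj]
  · simp

lemma mul_prod_sub (z : Fin n → ℂ) (e : Fin n → ℕ) (i : Fin n) :
    (e i : ℂ) * (z i * ∏ j, z j ^ (e j - if j = i then 1 else 0)) = e i * ∏ j, z j ^ e j := by
  rw [prod_sub, ← Finset.prod_erase_mul _ _ (Finset.mem_univ i)]
  rcases Nat.eq_zero_or_pos (e i) with h | h
  · simp [h]
  · obtain ⟨k, hk⟩ : ∃ k, e i = k + 1 := ⟨e i - 1, by omega⟩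
    rw [hk]; simp only [Nat.add_sub_cancel]; ring

lemma mul_dz (c : MixedCoeff n) (z : Fin n → ℂ) (i : Fin n) :
    z i * dz c i z = ∑ p ∈ c.support, (p.1 i : ℂ) * T c p z := by
  unfold dz Finsupp.sum T
  rw [Finset.mul_sum]
  apply Finset.sum_congr rfl
  intro p _
  have := mul_prod_sub z p.1 i
  linear_combination (c p * ∏ j, (starRingEnd ℂ) (z j) ^ p.2 j) * this

lemma mul_dzbar (c : MixedCoeff n) (z : Fin n → ℂ) (i : Fin n) :
    (starRingEnd ℂ) (z i) * dzbar c i z = ∑ p ∈ c.support, (p.2 i : ℂ) * T c p z := by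
  unfold dzbar Finsupp.sum T
  rw [Finset.mul_sum]
  apply Finset.sum_congr rfl
  intro p _
  have := mul_prod_sub (fun j => (starRingEnd ℂ) (z j)) p.2 i
  linear_combination (c p * ∏ j, z j ^ p.1 j) * this

lemma mul_grad (c : MixedCoeff n) (z : Fin n → ℂ) (m : ℂ) (i : Fin n) :
    (starRingEnd ℂ) (z i) * (m * (starRingEnd ℂ) (dz c i z) + (starRingEnd ℂ) m * dzbar c i z) =
      ∑ p ∈ c.support, Q c m p z i := by
  have h1 := congrArg (starRingEnd ℂ) (mul_dz c z i)
  have h2 := mul_dzbar c z i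
  unfold Q
  rw [Finset.sum_add_distrib]
  simp only [map_mul, map_sum, map_natCast] at h1
  have e1 : ∑ p ∈ c.support, (p.1 i : ℂ) * (m * (starRingEnd ℂ) (T c p z)) =
      m * ∑ p ∈ c.support, (p.1 i : ℂ) * (starRingEnd ℂ) (T c p z) := by
    rw [Finset.mul_sum]; exact Finset.sum_congr rfl fun p _ => by ring
  have e2 : ∑ p ∈ c.support, (p.2 i : ℂ) * ((starRingEnd ℂ) m * T c p z) =
      (starRingEnd ℂ) m * ∑ p ∈ c.support, (p.2 i : ℂ) * T c p z := by
    rw [Finset.mul_sum]; exact Finset.sum_congr rfl fun p _ => by ring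
  rw [e1, e2, ← h1, ← h2]; ring

lemma hasDerivAt_prod (z v : Fin n → ℂ) (e : Fin n → ℕ) :
    HasDerivAt (fun t : ℝ => ∏ i, (z i + t * v i) ^ e i)
      (∑ i, e i * (∏ j, z j ^ (e j - if j = i then 1 else 0)) * v i) 0 := by
  have h : ∀ i ∈ (univ : Finset (Fin n)), HasDerivAt (fun t : ℝ => (z i + t * v i) ^ e i)
      ((e i : ℂ) * (z i + (0 : ℝ) * v i) ^ (e i - 1) * v i) 0 := by
    intro i _
    have h0 : HasDerivAt (fun t : ℝ => z i + t * v i) (v i) 0 := by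
      have := ((Complex.ofRealCLM.hasDerivAt (x := (0:ℝ))).mul_const (v i)).const_add (z i)
      simpa using this
    exact h0.fun_pow (e i)
  have := HasDerivAt.fun_finsetProd h
  refine this.congr_deriv ?_
  apply Finset.sum_congr rfl
  intro i _
  rw [prod_sub]
  simp
  ring

lemma fderiv_eval (c : MixedCoeff n) (z v : Fin n → ℂ) :
    fderiv ℝ (eval c) z v = ∑ i, (dz c i z * v i + dzbar c i z * (starRingEnd ℂ) (v i)) := by
  have hd : DifferentiableAt ℝ (eval c) z := by
    have hc : ∀ i, Differentiable ℝ (fun z : Fin n → ℂ => (starRingEnd ℂ) (z i)) := by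
      intro i
      exact (Complex.conjCLE.differentiable).comp (differentiable_apply i)
    show DifferentiableAt ℝ (fun z => ∑ p ∈ c.support, T c p z) z
    unfold T
    have hc' : ∀ i, DifferentiableAt ℝ (fun z : Fin n → ℂ => (starRingEnd ℂ) (z i)) z :=
      fun i => hc i z
    apply DifferentiableAt.fun_sum
    intro p _
    apply DifferentiableAt.mul
    · apply DifferentiableAt.const_mul
      exact (HasFDerivAt.finsetProd (u := univ) (g := fun i (y : Fin n → ℂ) => y i ^ p.1 i)
        (fun i _ => (show DifferentiableAt ℝ (fun y : Fin n → ℂ => y i ^ p.1 i) z by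
          fun_prop).hasFDerivAt)).differentiableAt
    · exact (HasFDerivAt.finsetProd (u := univ)
        (g := fun i (y : Fin n → ℂ) => (starRingEnd ℂ) (y i) ^ p.2 i)
        (fun i _ => ((hc' i).fun_pow _).hasFDerivAt)).differentiableAt
  have h1 := (hd.hasFDerivAt.hasLineDerivAt v)
  unfold HasLineDerivAt at h1
  refine h1.unique ?_
  have h2 : HasDerivAt (fun t : ℝ => ∑ p ∈ c.support, T c p (z + t • v))
      (∑ p ∈ c.support, (c p * (∑ i, p.1 i * (∏ j, z j ^ (p.1 j - if j = i then 1 else 0)) * v i) *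
          (∏ i, (starRingEnd ℂ) (z i) ^ p.2 i) +
        c p * (∏ i, z i ^ p.1 i) * (∑ i, p.2 i * (∏ j, (starRingEnd ℂ) (z j) ^
          (p.2 j - if j = i then 1 else 0)) * (starRingEnd ℂ) (v i)))) 0 := by
    apply HasDerivAt.fun_sum
    intro p _
    have := ((hasDerivAt_prod z v p.1).const_mul (c p)).mul
      (hasDerivAt_prod (fun i => (starRingEnd ℂ) (z i)) (fun i => (starRingEnd ℂ) (v i)) p.2)
    refine (this.congr_deriv ?_).congr_of_eventuallyEq (Eventually.of_forall fun t => ?_)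
    · simp only [Complex.ofReal_zero, zero_mul, add_zero]
    · simp [T]
  refine h2.congr_deriv ?_
  unfold dz dzbar Finsupp.sum
  simp only [Finset.sum_add_distrib, Finset.sum_mul, Finset.mul_sum]
  congr 1
  · rw [Finset.sum_comm]
    refine Finset.sum_congr rfl fun i _ => Finset.sum_congr rfl fun p _ => by ring
  · rw [Finset.sum_comm]
    refine Finset.sum_congr rfl fun i _ => Finset.sum_congr rfl fun p _ => by ring

lemma re_fderiv (c : MixedCoeff n) (z v : Fin n → ℂ) (m : ℂ) :
    ((starRingEnd ℂ) m * fderiv ℝ (eval c) z v).re =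
      (∑ i, (starRingEnd ℂ) (v i) *
        (m * (starRingEnd ℂ) (dz c i z) + (starRingEnd ℂ) m * dzbar c i z)).re := by
  rw [fderiv_eval, Finset.mul_sum, Complex.re_sum, Complex.re_sum]
  refine Finset.sum_congr rfl fun i _ => ?_
  simp; ring

/-- a torus point with vanishing logarithmic gradient is singular -/
lemma mem_Sing (c : MixedCoeff n) (z : Fin n → ℂ) (hz : ∀ i, z i ≠ 0) (m : ℂ) (hm : m ≠ 0)
    (h : ∀ i, ∑ p ∈ c.support, Q c m p z i = 0) : z ∈ Sing c := by
  intro hs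
  obtain ⟨v, hv⟩ := hs m
  have h1 := re_fderiv c z v m
  have h2 : ∀ i, m * (starRingEnd ℂ) (dz c i z) + (starRingEnd ℂ) m * dzbar c i z = 0 := by
    intro i
    have := mul_grad c z m i
    rw [h i] at this
    rcases mul_eq_zero.1 this with h | h
    · exact absurd ((map_eq_zero _).1 h) (hz i)
    · exact h
  simp only [h2, mul_zero, Finset.sum_const_zero, Complex.zero_re] at h1
  rw [hv, mul_comm, Complex.mul_conj] at h1
  simp [hm] at h1

/-- a singular point has vanishing logarithmic gradient -/
lemma exists_of_mem_Sing (c : MixedCoeff n) (z : Fin n → ℂ) (h : z ∈ Sing c) :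
    ∃ m : ℂ, m ≠ 0 ∧ ∀ i, ∑ p ∈ c.support, Q c m p z i = 0 := by
  have hr : LinearMap.range (fderiv ℝ (eval c) z : (Fin n → ℂ) →ₗ[ℝ] ℂ) < ⊤ := by
    rw [lt_top_iff_ne_top]
    intro hh
    exact h (LinearMap.range_eq_top.1 hh)
  obtain ⟨g, hg0, hg⟩ := Submodule.exists_le_ker_of_lt_top _ hr
  have hgf : ∀ w : ℂ, g w = w.re * g 1 + w.im * g Complex.I := by
    intro w
    have : w = w.re • (1 : ℂ) + w.im • Complex.I := by
      simp [Complex.re_add_im]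
    conv_lhs => rw [this]
    rw [map_add, map_smul, map_smul]; simp
  refine ⟨⟨g 1, g Complex.I⟩, ?_, ?_⟩
  · intro h0
    apply hg0
    have h1 := congrArg Complex.re h0
    have h2 := congrArg Complex.im h0
    simp at h1 h2
    apply LinearMap.ext
    intro x
    rw [hgf, h1, h2]; simp
  · set m : ℂ := ⟨g 1, g Complex.I⟩ with hm
    have key : ∀ v, ((starRingEnd ℂ) m * fderiv ℝ (eval c) z v).re = 0 := by
      intro v
      have : g (fderiv ℝ (eval c) z v) = 0 := hg ⟨v, rfl⟩
      rw [hgf] at this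
      simp [hm]; linarith
    intro i
    rw [← mul_grad]
    set G := m * (starRingEnd ℂ) (dz c i z) + (starRingEnd ℂ) m * dzbar c i z with hG
    have h1 := key (Pi.single i G)
    rw [re_fderiv, Finset.sum_eq_single i] at h1
    · rw [Pi.single_eq_same, ← hG, mul_comm, Complex.mul_conj] at h1
      have : G = 0 := by simpa using h1
      rw [this, mul_zero]
    · intro j _ hj
      simp [Pi.single_eq_of_ne hj]
    · simp

end Mixed

namespace Mixed

variable {n : ℕ}

lemma face_aux (c : MixedCoeff n) (hnd : NewtonStronglyNonDeg c)
    (A : Finset ((Fin n → ℕ) × (Fin n → ℕ))) (hA : A ⊆ c.support) (hne : A.Nonempty)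
    (w : Fin n → ℝ) (d : ℝ) (hd : 0 < d)
    (hAd : ∀ p ∈ A, ∑ i, w i * suppPt p i = d)
    (hlt : ∀ p ∈ c.support, p ∉ A → ∑ i, w i * suppPt p i < d)
    (z : Fin n → ℂ) (hz : ∀ i, z i ≠ 0) (m : ℂ) (hm : m ≠ 0)
    (h : ∀ i, ∑ p ∈ A, Q c m p z i = 0) : False := by
  classical
  have hle : ∀ y ∈ Gamma0 c, ∑ i, w i * y i ≤ d := by
    have hconv : Convex ℝ {y : Fin n → ℝ | ∑ i, w i * y i ≤ d} := by
      apply convex_halfSpace_le (f := fun y : Fin n → ℝ => ∑ i, w i * y i)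
      constructor
      · intro x y; simp [mul_add, Finset.sum_add_distrib]
      · intro a x; simp only [Pi.smul_apply, smul_eq_mul, Finset.mul_sum]
        exact Finset.sum_congr rfl fun i _ => by ring
    have : insert 0 (suppPts c) ⊆ {y : Fin n → ℝ | ∑ i, w i * y i ≤ d} := by
      rintro y (rfl | ⟨p, hp, rfl⟩)
      · simpa using hd.le
      · by_cases hpA : p ∈ A
        · exact (hAd p hpA).le
        · exact (hlt p hp hpA).le
    exact convexHull_min this hconv
  have hmem : ∀ p ∈ c.support, suppPt p ∈ Gamma0 c := fun p hp =>
    subset_convexHull ℝ _ (Or.inr ⟨p, hp, rfl⟩)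
  obtain ⟨p0, hp0⟩ := hne
  set Δ : Set (Fin n → ℝ) := {x ∈ Gamma0 c | ∀ y ∈ Gamma0 c,
    ∑ i, (fun i => - w i) i * x i ≤ ∑ i, (fun i => - w i) i * y i} with hΔ
  have hΔiff : ∀ x, x ∈ Δ ↔ x ∈ Gamma0 c ∧ ∑ i, w i * x i = d := by
    intro x
    constructor
    · rintro ⟨hx, hx2⟩
      refine ⟨hx, le_antisymm (hle x hx) ?_⟩
      have := hx2 _ (hmem p0 (hA hp0))
      simp only [neg_mul, Finset.sum_neg_distrib, neg_le_neg_iff] at this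
      rw [hAd p0 hp0] at this
      exact this
    · rintro ⟨hx, hx2⟩
      refine ⟨hx, fun y hy => ?_⟩
      simp only [neg_mul, Finset.sum_neg_distrib, neg_le_neg_iff]
      rw [hx2]; exact hle y hy
  have hface : IsGammaPlusFace c Δ := by
    refine ⟨⟨⟨suppPt p0, (hΔiff _).2 ⟨hmem p0 (hA hp0), hAd p0 hp0⟩⟩, Or.inr ⟨_, hΔ⟩⟩, ?_⟩
    intro h0
    have := ((hΔiff _).1 h0).2
    simp at this
    exact hd.ne this
  have hsup : (trunc c Δ).support = A := by
    ext p
    unfold trunc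
    rw [@Finsupp.support_filter, @Finset.mem_filter, hΔiff]
    constructor
    · rintro ⟨hp, _, hp2⟩
      by_contra hpA
      exact (hlt p hp hpA).ne hp2
    · intro hp
      exact ⟨hA hp, hmem p (hA hp), hAd p hp⟩
  refine hnd Δ hface z hz (mem_Sing _ z hz m hm fun i => ?_)
  rw [← h i, hsup]
  refine Finset.sum_congr rfl fun p hp => ?_
  have : (trunc c Δ) p = c p := by
    unfold trunc
    exact @Finsupp.filter_apply_pos _ _ _ _ (Classical.decPred _) _ _ ((hΔiff _).2 ⟨hmem p (hA hp), hAd p hp⟩)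
  unfold Q T
  rw [this]

lemma face (c : MixedCoeff n) (hnd : NewtonStronglyNonDeg c)
    (q : Fin n → ℕ) (D : ℕ) (hD : 0 < D)
    (hq : ∀ p ∈ c.support, ∑ i, q i * (p.1 i + p.2 i) = D)
    (I : Set (Fin n))
    (A : Finset ((Fin n → ℕ) × (Fin n → ℕ))) (hA : A ⊆ c.support) (hne : A.Nonempty)
    (w : Fin n → ℝ) (d : ℝ)
    (hAI : ∀ p ∈ A, ∀ i, i ∉ I → suppPt p i = 0)
    (hAd : ∀ p ∈ A, ∑ i, w i * suppPt p i = d)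
    (hlt : ∀ p ∈ c.support, p ∉ A → (∀ i, i ∉ I → suppPt p i = 0) → ∑ i, w i * suppPt p i < d)
    (z : Fin n → ℂ) (hz : ∀ i, z i ≠ 0) (m : ℂ) (hm : m ≠ 0)
    (h : ∀ i, ∑ p ∈ A, Q c m p z i = 0) : False := by
  classical
  have hq' : ∀ p ∈ c.support, ∑ i, (q i : ℝ) * suppPt p i = D := by
    intro p hp
    rw [← hq p hp]; simp [suppPt]
  set N' : ℝ := 1 + |d| + ∑ p ∈ c.support, |∑ i, w i * suppPt p i| with hN'
  have hD1 : (1 : ℝ) ≤ D := by exact_mod_cast hD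
  have hsp : ∀ p i, 0 ≤ suppPt (n := n) p i := fun p i => Nat.cast_nonneg _
  have hsum : ∀ p ∈ c.support, ∑ i, (w i - (if i ∈ I then 0 else N') + (|d| + 1) * q i) * suppPt p i
      = ∑ i, w i * suppPt p i - N' * ∑ i, (if i ∈ I then 0 else suppPt p i) + (|d| + 1) * D := by
    intro p hp
    rw [← hq' p hp, Finset.mul_sum, Finset.mul_sum, ← Finset.sum_sub_distrib,
      ← Finset.sum_add_distrib]
    refine Finset.sum_congr rfl fun i _ => ?_
    split_ifs <;> ring
  refine face_aux c hnd A hA hne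
    (fun i => w i - (if i ∈ I then 0 else N') + (|d| + 1) * q i) (d + (|d| + 1) * D) ?_ ?_ ?_
    z hz m hm h
  · nlinarith [neg_abs_le d, abs_nonneg d]
  · intro p hp
    rw [hsum p (hA hp), hAd p hp]
    have : ∑ i, (if i ∈ I then 0 else suppPt p i) = 0 := by
      apply Finset.sum_eq_zero
      intro i _
      split_ifs with hi
      · rfl
      · exact hAI p hp i hi
    rw [this]; ring
  · intro p hp hpA
    show ∑ i, (w i - (if i ∈ I then 0 else N') + (|d| + 1) * q i) * suppPt p i < _
    rw [hsum p hp]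
    by_cases hI : ∀ i, i ∉ I → suppPt p i = 0
    · have : ∑ i, (if i ∈ I then 0 else suppPt p i) = 0 := by
        apply Finset.sum_eq_zero
        intro i _
        split_ifs with hi
        · rfl
        · exact hI i hi
      rw [this]
      linarith [hlt p hp hpA hI]
    · push Not at hI
      obtain ⟨i, hi, hpi⟩ := hI
      have h1 : 1 ≤ suppPt p i := by
        unfold suppPt at hpi ⊢
        have : p.1 i + p.2 i ≠ 0 := by exact_mod_cast hpi
        exact_mod_cast Nat.one_le_iff_ne_zero.2 this
      have h2 : suppPt p i ≤ ∑ i, (if i ∈ I then 0 else suppPt p i) := by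
        have := Finset.single_le_sum (f := fun i => if i ∈ I then 0 else suppPt p i)
          (s := univ) (fun j _ => by split_ifs; exacts [le_rfl, hsp p j])
          (Finset.mem_univ i)
        simpa [hi] using this
      have h3 : |∑ i, w i * suppPt p i| ≤ ∑ p ∈ c.support, |∑ i, w i * suppPt p i| :=
        Finset.single_le_sum (f := fun p => |∑ i, w i * suppPt p i|) (fun _ _ => abs_nonneg _) hp
      have h4 : 0 ≤ N' := by
        have := abs_nonneg d
        have := abs_nonneg (∑ i, w i * suppPt p i)
        linarith
      have h5 : N' ≤ N' * ∑ i, (if i ∈ I then 0 else suppPt p i) := by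
        nlinarith
      linarith [neg_abs_le d, le_abs_self (∑ i, w i * suppPt p i)]

/-- terms do not see the coordinates with zero exponent -/
lemma T_congr (c : MixedCoeff n) (p : (Fin n → ℕ) × (Fin n → ℕ)) (z y : Fin n → ℂ)
    (h : ∀ i, suppPt p i ≠ 0 → z i = y i) : T c p z = T c p y := by
  have h' : ∀ i, z i ^ p.1 i = y i ^ p.1 i ∧
      (starRingEnd ℂ) (z i) ^ p.2 i = (starRingEnd ℂ) (y i) ^ p.2 i := by
    intro i
    by_cases hi : suppPt p i = 0
    · have : p.1 i + p.2 i = 0 := by unfold suppPt at hi; exact_mod_cast hi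
      have h1 : p.1 i = 0 := by omega
      have h2 : p.2 i = 0 := by omega
      simp [h1, h2]
    · rw [h i hi]; simp
  unfold T
  rw [Finset.prod_congr rfl fun i _ => (h' i).1, Finset.prod_congr rfl fun i _ => (h' i).2]

lemma T_zero (c : MixedCoeff n) (p : (Fin n → ℕ) × (Fin n → ℕ)) (z : Fin n → ℂ) (i : Fin n)
    (h : suppPt p i ≠ 0) (hz : z i = 0) : T c p z = 0 := by
  have h0 : p.1 i + p.2 i ≠ 0 := by unfold suppPt at h; exact_mod_cast h
  unfold T
  by_cases h1 : p.1 i = 0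
  · have h2 : p.2 i ≠ 0 := by omega
    rw [Finset.prod_eq_zero (f := fun i => (starRingEnd ℂ) (z i) ^ p.2 i) (Finset.mem_univ i)
      (by simp [hz, h2]), mul_zero]
  · rw [Finset.prod_eq_zero (f := fun i => z i ^ p.1 i) (Finset.mem_univ i)
      (by simp [hz, h1]), mul_zero, zero_mul]

/-- critical values -/
lemma crit_zero (c : MixedCoeff n) (hnd : NewtonStronglyNonDeg c)
    (q : Fin n → ℕ) (D : ℕ) (hD : 0 < D)
    (hq : ∀ p ∈ c.support, ∑ i, q i * (p.1 i + p.2 i) = D)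
    (z : Fin n → ℂ) (hz : z ∈ Sing c) : eval c z = 0 := by
  classical
  by_contra hne
  obtain ⟨m, hm, h⟩ := exists_of_mem_Sing c z hz
  set I : Set (Fin n) := {i | z i ≠ 0} with hI
  set A := c.support.filter (fun p => ∀ i, i ∉ I → suppPt p i = 0) with hA
  have hT0 : ∀ p ∈ c.support, p ∉ A → T c p z = 0 := by
    intro p hp hpA
    rw [hA, Finset.mem_filter] at hpA
    push Not at hpA
    obtain ⟨i, hi, hpi⟩ := hpA hp
    exact T_zero c p z i hpi (by simpa [hI] using hi)
  refine face c hnd q D hD hq I A (Finset.filter_subset _ _) ?_ 0 0 ?_ ?_ ?_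
    (fun i => if z i = 0 then 1 else z i) ?_ m hm ?_
  · rw [Finset.nonempty_iff_ne_empty]
    intro he
    apply hne
    rw [eval_eq]
    exact Finset.sum_eq_zero fun p hp => hT0 p hp (by simp [he])
  · intro p hp
    exact (Finset.mem_filter.1 hp).2
  · simp
  · intro p hp hpA hpI
    exact absurd (Finset.mem_filter.2 ⟨hp, hpI⟩) hpA
  · intro i; split_ifs with h
    · exact one_ne_zero
    · exact h
  · intro i
    refine Eq.trans ?_ (h i)
    have : ∑ p ∈ A, Q c m p z i = ∑ p ∈ c.support, Q c m p z i := by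
      apply Finset.sum_subset (Finset.filter_subset _ _)
      intro p hp hpA
      simp [Q, hT0 p hp hpA]
    rw [← this]
    refine Finset.sum_congr rfl fun p hp => ?_
    unfold Q
    rw [T_congr c p _ z]
    intro j hj
    have : z j ≠ 0 := by
      by_contra h0
      exact hj ((Finset.mem_filter.1 hp).2 j (by simp [hI, h0]))
    simp [this]

/-- dichotomy of real sequences along an ultrafilter -/
lemma tri (U : Ultrafilter ℕ) (g : ℕ → ℝ) :
    (∃ t, Tendsto g U (nhds t)) ∨ Tendsto g U atTop ∨ Tendsto g U atBot := by
  by_cases h : ∃ C, ∀ᶠ k in (U : Filter ℕ), |g k| ≤ C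
  · left
    obtain ⟨C, hC⟩ := h
    have hc : IsCompact (Set.Icc (-C) C) := isCompact_Icc
    obtain ⟨t, _, ht⟩ := hc.ultrafilter_le_nhds (U.map g) (by
      rw [le_principal_iff]
      show ∀ᶠ k in (U : Filter ℕ), g k ∈ Set.Icc (-C) C
      filter_upwards [hC] with k hk
      exact abs_le.1 hk)
    exact ⟨t, ht⟩
  · right
    push Not at h
    have h' : ∀ C, ∀ᶠ k in (U : Filter ℕ), C < |g k| := h
    rcases U.em (fun k => 0 ≤ g k) with h0 | h0
    · left
      rw [tendsto_atTop]
      intro b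
      filter_upwards [h0, h' b] with k h1 h2
      rw [abs_of_nonneg h1] at h2; exact h2.le
    · right
      rw [tendsto_atBot]
      intro b
      filter_upwards [h0, h' (-b)] with k h1 h2
      rw [abs_of_neg (not_le.1 h1)] at h2; linarith

/-- pigeonhole along an ultrafilter -/
lemma pigeon {α : Type*} [Finite α] (U : Ultrafilter ℕ) (g : ℕ → α) :
    ∃ a, ∀ᶠ k in (U : Filter ℕ), g k = a := by
  by_contra h
  push Not at h
  have : ∀ a, ∀ᶠ k in (U : Filter ℕ), g k ≠ a := h
  have := Filter.eventually_all.2 this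
  obtain ⟨k, hk⟩ := this.exists
  exact hk _ rfl

/-- splitting off the bounded part -/
lemma split_bounded (U : Ultrafilter ℕ) (x : ℕ → Fin n → ℝ) :
    ∃ (b : ℕ → Fin n → ℝ) (b0 : Fin n → ℝ), (∀ i, Tendsto (fun k => b k i) U (nhds (b0 i))) ∧
      ∀ v : Fin n → ℝ, (∃ t, Tendsto (fun k => ∑ i, v i * x k i) U (nhds t)) →
        ∀ k, ∑ i, v i * b k i = ∑ i, v i * x k i := by
  let V : Submodule ℝ (EuclideanSpace ℝ (Fin n)) :=
    { carrier := {v | ∃ t, Tendsto (fun k => ∑ i, v i * x k i) U (nhds t)}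
      add_mem' := by
        rintro v w ⟨t, ht⟩ ⟨s, hs⟩
        refine ⟨t + s, (ht.add hs).congr fun k => ?_⟩
        simp [add_mul, Finset.sum_add_distrib]
      zero_mem' := ⟨0, by simp⟩
      smul_mem' := by
        rintro a v ⟨t, ht⟩
        refine ⟨a * t, (ht.const_mul a).congr fun k => ?_⟩
        simp [Finset.mul_sum, mul_assoc] }
  let e := stdOrthonormalBasis ℝ V
  have he : ∀ j, ∃ t, Tendsto (fun k => ∑ i, (e j : EuclideanSpace ℝ (Fin n)) i * x k i) U (nhds t) :=
    fun j => (e j).2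
  choose t ht using he
  refine ⟨fun k i => ∑ j, (∑ i', (e j : EuclideanSpace ℝ (Fin n)) i' * x k i') *
    (e j : EuclideanSpace ℝ (Fin n)) i, fun i => ∑ j, t j * (e j : EuclideanSpace ℝ (Fin n)) i,
    fun i => ?_, ?_⟩
  · exact tendsto_finsetSum _ fun j _ => (ht j).mul_const _
  · intro v hv k
    let v' : V := ⟨WithLp.toLp 2 v, hv⟩
    have h1 := e.sum_repr' v'
    have h2 : ∀ i, v i = ∑ j, (∑ i', v i' * (e j : EuclideanSpace ℝ (Fin n)) i') *
        (e j : EuclideanSpace ℝ (Fin n)) i := by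
      intro i
      have h3 := congrArg (fun y : V => (y : EuclideanSpace ℝ (Fin n)) i) h1
      simp only [Submodule.coe_sum, Submodule.coe_smul, WithLp.ofLp_sum, Finset.sum_apply,
        PiLp.smul_apply, smul_eq_mul, Submodule.coe_inner, PiLp.inner_apply] at h3
      rw [show (v' : EuclideanSpace ℝ (Fin n)) i = v i from rfl] at h3
      rw [← h3]
      simp [v']
    have h3 : ∑ i, v i * x k i = ∑ i, (∑ j, (∑ i', v i' * (e j : EuclideanSpace ℝ (Fin n)) i') *
        (e j : EuclideanSpace ℝ (Fin n)) i) * x k i :=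
      Finset.sum_congr rfl fun i _ => by rw [← h2 i]
    rw [h3]
    simp only [Finset.mul_sum, Finset.sum_mul]
    rw [Finset.sum_comm]
    conv_rhs => rw [Finset.sum_comm]
    refine Finset.sum_congr rfl fun j _ => ?_
    rw [Finset.sum_comm]
    refine Finset.sum_congr rfl fun i _ => Finset.sum_congr rfl fun i' _ => ?_
    ring

end Mixed

namespace Mixed

variable {n : ℕ}

lemma Q_re (c : MixedCoeff n) (m : ℂ) (p : (Fin n → ℕ) × (Fin n → ℕ)) (z : Fin n → ℂ)
    (i : Fin n) : (Q c m p z i).re = suppPt p i * ((starRingEnd ℂ) m * T c p z).re := by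
  unfold Q suppPt
  simp
  ring

lemma sum_Q_re (c : MixedCoeff n) (m : ℂ) (A : Finset ((Fin n → ℕ) × (Fin n → ℕ)))
    (z : Fin n → ℂ) (w : Fin n → ℝ) :
    ∑ i, w i * (∑ p ∈ A, Q c m p z i).re =
      ∑ p ∈ A, (∑ i, w i * suppPt p i) * ((starRingEnd ℂ) m * T c p z).re := by
  simp only [Complex.re_sum, Q_re, Finset.mul_sum, Finset.sum_mul]
  rw [Finset.sum_comm]
  exact Finset.sum_congr rfl fun p _ => Finset.sum_congr rfl fun i _ => by ring

lemma milnor_norm (c : MixedCoeff n) (z : Fin n → ℂ) (hz : z ∈ Milnor c) :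
    ∃ (l : ℝ) (m : ℂ), ‖m‖ = 1 ∧
      ∀ i, ((l * ‖z i‖ ^ 2 : ℝ) : ℂ) = ∑ p ∈ c.support, Q c m p z i := by
  obtain ⟨l, m, hm, h⟩ := hz
  have hm' : ‖m‖ ≠ 0 := norm_ne_zero_iff.2 hm
  refine ⟨‖m‖⁻¹ * l, (‖m‖⁻¹ : ℝ) * m, ?_, fun i => ?_⟩
  · rw [norm_mul, Complex.norm_real, norm_inv, norm_norm, inv_mul_cancel₀ hm']
  · rw [← mul_grad]
    have h1 := h i
    have h2 : (starRingEnd ℂ) (z i) * z i = ((‖z i‖ ^ 2 : ℝ) : ℂ) := by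
      rw [mul_comm, Complex.mul_conj, Complex.normSq_eq_norm_sq]
    rw [map_mul, Complex.conj_ofReal]
    rw [show ((‖m‖⁻¹ * l * ‖z i‖ ^ 2 : ℝ) : ℂ) = (‖m‖⁻¹ : ℝ) * l * ((‖z i‖ ^ 2 : ℝ) : ℂ) by
      push_cast; ring, ← h2]
    linear_combination ((‖m‖⁻¹ : ℝ) : ℂ) * (starRingEnd ℂ) (z i) * h1

lemma milnor_bound (c : MixedCoeff n)
    (q : Fin n → ℕ) (D : ℕ) (hqpos : ∀ i, 0 < q i)
    (hq : ∀ p ∈ c.support, ∑ i, q i * (p.1 i + p.2 i) = D)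
    (z : Fin n → ℂ) (l : ℝ) (m : ℂ) (hm : ‖m‖ = 1)
    (h : ∀ i, ((l * ‖z i‖ ^ 2 : ℝ) : ℂ) = ∑ p ∈ c.support, Q c m p z i) (i : Fin n) :
    |l * ‖z i‖ ^ 2| ≤ D * ‖eval c z‖ := by
  have h1 := sum_Q_re c m c.support z (fun i => (q i : ℝ))
  have hq' : ∀ p ∈ c.support, ∑ i, (q i : ℝ) * suppPt p i = D := by
    intro p hp
    rw [← hq p hp]; simp [suppPt]
  have h2 : ∑ p ∈ c.support, (∑ i, (q i : ℝ) * suppPt p i) * ((starRingEnd ℂ) m * T c p z).re =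
      D * ((starRingEnd ℂ) m * eval c z).re := by
    rw [eval_eq, Finset.mul_sum, Complex.re_sum, Finset.mul_sum]
    exact Finset.sum_congr rfl fun p hp => by rw [hq' p hp]
  rw [h2] at h1
  simp only [← h, Complex.ofReal_re] at h1
  have h3 : |((starRingEnd ℂ) m * eval c z).re| ≤ ‖eval c z‖ := by
    refine (Complex.abs_re_le_norm _).trans ?_
    rw [norm_mul, RCLike.norm_conj, hm, one_mul]
  have h4 : ∑ i, (q i : ℝ) * (l * ‖z i‖ ^ 2) = l * ∑ i, (q i : ℝ) * ‖z i‖ ^ 2 := by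
    rw [Finset.mul_sum]; exact Finset.sum_congr rfl fun i _ => by ring
  rw [h4] at h1
  have h5 : ‖z i‖ ^ 2 ≤ ∑ i, (q i : ℝ) * ‖z i‖ ^ 2 := by
    have h6 : (q i : ℝ) * ‖z i‖ ^ 2 ≤ ∑ i, (q i : ℝ) * ‖z i‖ ^ 2 :=
      Finset.single_le_sum (f := fun i => (q i : ℝ) * ‖z i‖ ^ 2) (fun j _ => by positivity)
        (Finset.mem_univ i)
    have h7 : (1 : ℝ) ≤ q i := by exact_mod_cast hqpos i
    nlinarith [sq_nonneg ‖z i‖]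
  have h6 : |l * ∑ i, (q i : ℝ) * ‖z i‖ ^ 2| ≤ D * ‖eval c z‖ := by
    rw [h1, abs_mul, Nat.abs_cast]
    gcongr
  refine le_trans ?_ h6
  rw [abs_mul, abs_mul]
  refine mul_le_mul_of_nonneg_left ?_ (abs_nonneg l)
  rw [abs_of_nonneg (by positivity)]
  exact h5.trans (le_abs_self _)

lemma T_exp (c : MixedCoeff n) (p : (Fin n → ℕ) × (Fin n → ℕ)) (w : Fin n → ℝ) (a : Fin n → ℂ) :
    T c p (fun i => (Real.exp (w i) : ℂ) * a i) =
      (Real.exp (∑ i, w i * suppPt p i) : ℂ) * T c p a := by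
  have h : (Real.exp (∑ i, w i * suppPt p i) : ℂ) =
      (∏ i, (Real.exp (w i) : ℂ) ^ p.1 i) * ∏ i, (Real.exp (w i) : ℂ) ^ p.2 i := by
    rw [Real.exp_sum, ← Finset.prod_mul_distrib]
    push_cast
    refine Finset.prod_congr rfl fun i _ => ?_
    rw [← pow_add, ← Complex.exp_nat_mul]
    simp [suppPt]
    ring_nf
  rw [h]
  unfold T
  simp only [map_mul, Complex.conj_ofReal, mul_pow, Finset.prod_mul_distrib]
  ring

lemma T_continuous (c : MixedCoeff n) (p : (Fin n → ℕ) × (Fin n → ℕ)) :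
    Continuous (T c p) := by
  unfold T
  have : ∀ i, Continuous (fun z : Fin n → ℂ => (starRingEnd ℂ) (z i)) := fun i =>
    Complex.continuous_conj.comp (continuous_apply i)
  fun_prop

lemma unit_limit (U : Ultrafilter ℕ) (u : ℕ → ℂ) (hu : ∀ k, ‖u k‖ = 1) :
    ∃ u0, ‖u0‖ = 1 ∧ Tendsto u U (nhds u0) := by
  obtain ⟨t, h1, ht⟩ := (isCompact_sphere (0 : ℂ) 1).ultrafilter_le_nhds (U.map u) (by
      rw [le_principal_iff]
      show ∀ᶠ k in (U : Filter ℕ), u k ∈ Metric.sphere (0 : ℂ) 1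
      exact Eventually.of_forall fun k => by simp [hu])
  exact ⟨t, by simpa using h1, ht⟩

lemma Sset_zero (c : MixedCoeff n) (hnd : NewtonStronglyNonDeg c)
    (q : Fin n → ℕ) (D : ℕ) (hD : 0 < D) (hqpos : ∀ i, 0 < q i)
    (hq : ∀ p ∈ c.support, ∑ i, q i * (p.1 i + p.2 i) = D)
    (v : ℂ) (hv : v ∈ Sset c) : v = 0 := by
  classical
  by_contra hv0
  obtain ⟨z, hM, hN, hE⟩ := hv
  choose l m hm hl using fun k => milnor_norm c (z k) (hM k)
  obtain ⟨U, hU⟩ := Ultrafilter.exists_le (atTop : Filter ℕ)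
  replace hN := hN.mono_left hU
  replace hE := hE.mono_left hU
  obtain ⟨m0, hm0, hmlim⟩ := unit_limit U m hm
  -- nonzero coordinates
  set I : Set (Fin n) := {i | ∀ᶠ k in (U : Filter ℕ), z k i ≠ 0} with hI
  have hgood : ∀ᶠ k in (U : Filter ℕ), ∀ i, (i ∈ I → z k i ≠ 0) ∧ (i ∉ I → z k i = 0) := by
    rw [Filter.eventually_all]
    intro i
    rcases U.em (fun k => z k i ≠ 0) with h | h
    · filter_upwards [h] with k hk
      exact ⟨fun _ => hk, fun hi => absurd h hi⟩
    · filter_upwards [h] with k hk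
      refine ⟨fun hi => ?_, fun _ => not_not.1 hk⟩
      obtain ⟨kk, hkk⟩ := (h.and hi).exists
      exact absurd hkk.2 hkk.1
  set x : ℕ → Fin n → ℝ := fun k i => Real.log ‖z k i‖ with hx
  set u : ℕ → Fin n → ℂ := fun k i => if z k i = 0 then 1 else z k i / (‖z k i‖ : ℂ) with hu
  have hu1 : ∀ i k, ‖u k i‖ = 1 := by
    intro i k
    simp only [hu]
    split_ifs with h
    · simp
    · have : ‖z k i‖ ≠ 0 := norm_ne_zero_iff.2 h
      rw [norm_div, Complex.norm_real, norm_norm, div_self this]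
  choose u0 hu0 hulim using fun i => unit_limit U (fun k => u k i) (hu1 i)
  obtain ⟨b, b0, hb, hV⟩ := split_bounded U x
  set w : ℕ → Fin n → ℝ := fun k i => x k i - b k i with hw
  have hVw : ∀ r : Fin n → ℝ, (∃ t, Tendsto (fun k => ∑ i, r i * x k i) U (nhds t)) →
      ∀ k, ∑ i, r i * w k i = 0 := by
    intro r hr k
    simp only [hw, mul_sub, Finset.sum_sub_distrib, hV r hr k, sub_self]
  have hbr : ∀ r : Fin n → ℝ, Tendsto (fun k => ∑ i, r i * b k i) U (nhds (∑ i, r i * b0 i)) :=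
    fun r => tendsto_finsetSum _ fun i _ => (hb i).const_mul _
  set a : ℕ → Fin n → ℂ := fun k i => (Real.exp (b k i) : ℂ) * u k i with ha
  set a0 : Fin n → ℂ := fun i => (Real.exp (b0 i) : ℂ) * u0 i with ha0
  have ha0ne : ∀ i, a0 i ≠ 0 := by
    intro i
    refine mul_ne_zero (by exact_mod_cast (Real.exp_pos _).ne') ?_
    rw [← norm_ne_zero_iff, hu0]; exact one_ne_zero
  have halim : Tendsto a U (nhds a0) := by
    rw [tendsto_pi_nhds]
    intro i
    refine Tendsto.mul ?_ (hulim i)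
    exact (Complex.continuous_ofReal.tendsto _).comp ((Real.continuous_exp.tendsto _).comp (hb i))
  have hnormz : ∀ k i, z k i ≠ 0 → ‖z k i‖ = Real.exp (x k i) := by
    intro k i h
    rw [hx]; exact (Real.exp_log (norm_pos_iff.2 h)).symm
  have hza : ∀ k i, z k i ≠ 0 → z k i = (Real.exp (w k i) : ℂ) * a k i := by
    intro k i h
    have hne : (‖z k i‖ : ℂ) ≠ 0 := by exact_mod_cast norm_ne_zero_iff.2 h
    simp only [ha]
    rw [← mul_assoc, ← Complex.ofReal_mul, ← Real.exp_add]
    simp only [hw, sub_add_cancel]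
    rw [← hnormz k i h]
    simp only [hu, if_neg h]
    field_simp
  -- terms alive
  set AI := c.support.filter (fun p => ∀ i, i ∉ I → suppPt p i = 0) with hAI
  have hAIsub : AI ⊆ c.support := Finset.filter_subset _ _
  have hT0 : ∀ p ∈ c.support, p ∉ AI → ∀ᶠ k in (U : Filter ℕ), T c p (z k) = 0 := by
    intro p hp hpA
    rw [hAI, Finset.mem_filter] at hpA
    push Not at hpA
    obtain ⟨i, hi, hpi⟩ := hpA hp
    filter_upwards [hgood] with k hk
    exact T_zero c p (z k) i hpi ((hk i).2 hi)
  have hT1 : ∀ p ∈ AI, ∀ᶠ k in (U : Filter ℕ),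
      T c p (z k) = (Real.exp (∑ i, w k i * suppPt p i) : ℂ) * T c p (a k) := by
    intro p hp
    filter_upwards [hgood] with k hk
    rw [← T_exp]
    apply T_congr
    intro i hi
    apply hza
    apply (hk i).1
    by_contra hiI
    exact hi ((Finset.mem_filter.1 hp).2 i hiI)
  have hAIne : AI.Nonempty := by
    rw [Finset.nonempty_iff_ne_empty]
    intro he
    have h0 : ∀ᶠ k in (U : Filter ℕ), ∀ p ∈ c.support, T c p (z k) = 0 := by
      rw [Filter.eventually_all_finset]
      intro p hp
      exact hT0 p hp (by simp [he])
    apply hv0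
    refine tendsto_nhds_unique hE (tendsto_const_nhds.congr' ?_)
    filter_upwards [h0] with k hk
    rw [eval_eq]
    exact (Finset.sum_eq_zero hk).symm
  -- dominant term
  obtain ⟨p0, hp0, hmax⟩ : ∃ p0 ∈ AI, ∀ᶠ k in (U : Filter ℕ), ∀ p ∈ AI,
      ∑ i, suppPt p i * x k i ≤ ∑ i, suppPt p0 i * x k i := by
    have h := fun k => AI.exists_max_image (fun p => ∑ i, suppPt p i * x k i) hAIne
    choose g hg hg2 using h
    obtain ⟨p0, hp0⟩ := pigeon U (fun k => (⟨g k, hg k⟩ : {p // p ∈ AI}))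
    refine ⟨p0.1, p0.2, ?_⟩
    filter_upwards [hp0] with k hk
    intro p hp
    rw [← hk]
    exact hg2 k p hp
  set A := AI.filter (fun p => ∃ t, Tendsto
    (fun k => ∑ i, (suppPt p0 i - suppPt p i) * x k i) U (nhds t)) with hA
  set d : ℕ → ℝ := fun k => ∑ i, w k i * suppPt p0 i with hd
  have hp0A : p0 ∈ A := by
    refine Finset.mem_filter.2 ⟨hp0, 0, ?_⟩
    simp
  have hAd : ∀ p ∈ A, ∀ k, ∑ i, w k i * suppPt p i = d k := by
    intro p hp k
    have := hVw _ (Finset.mem_filter.1 hp).2 k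
    simp only [sub_mul, Finset.sum_sub_distrib] at this
    simp only [hd, mul_comm (w k _)]
    linarith
  have hAn : ∀ p ∈ AI, p ∉ A → Tendsto (fun k => d k - ∑ i, w k i * suppPt p i) U atTop := by
    intro p hp hpA
    have h1 : Tendsto (fun k => ∑ i, (suppPt p0 i - suppPt p i) * x k i) U atTop := by
      rcases tri U (fun k => ∑ i, (suppPt p0 i - suppPt p i) * x k i) with h | h | h
      · exact absurd (Finset.mem_filter.2 ⟨hp, h⟩) hpA
      · exact h
      · have h2 := h.eventually (eventually_lt_atBot 0)
        obtain ⟨k, hk1, hk2⟩ := (h2.and hmax).exists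
        have := hk2 p hp
        simp only [sub_mul, Finset.sum_sub_distrib] at hk1
        linarith
    have h2 := h1.atTop_add (hbr (fun i => suppPt p0 i - suppPt p i)).neg
    refine h2.congr fun k => ?_
    simp only [hd, hw, ← Finset.sum_sub_distrib, ← Finset.sum_neg_distrib, ← Finset.sum_add_distrib]
    exact Finset.sum_congr rfl fun i _ => by ring
  have hTa : ∀ p, Tendsto (fun k => T c p (a k)) U (nhds (T c p a0)) := fun p =>
    ((T_continuous c p).tendsto _).comp halim
  have hlim : ∀ p ∈ c.support, Tendsto (fun k => (Real.exp (- d k) : ℂ) * T c p (z k)) U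
      (nhds (if p ∈ A then T c p a0 else 0)) := by
    intro p hp
    by_cases hpI : p ∈ AI
    · have h1 : ∀ᶠ k in (U : Filter ℕ), (Real.exp (-(d k - ∑ i, w k i * suppPt p i)) : ℂ) *
          T c p (a k) = (Real.exp (- d k) : ℂ) * T c p (z k) := by
        filter_upwards [hT1 p hpI] with k hk
        rw [hk, ← mul_assoc, ← Complex.ofReal_mul, ← Real.exp_add]
        ring_nf
      by_cases hpA : p ∈ A
      · rw [if_pos hpA]
        refine (hTa p).congr' ?_
        filter_upwards [h1] with k hk
        rw [← hk, hAd p hpA]; simp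
      · rw [if_neg hpA]
        refine Tendsto.congr' h1 ?_
        have h2 := (Complex.continuous_ofReal.tendsto _).comp
          (Real.tendsto_exp_neg_atTop_nhds_zero.comp (hAn p hpI hpA))
        have h3 := h2.mul (hTa p)
        simpa using h3
    · have hpA : p ∉ A := fun h => hpI (Finset.filter_subset _ _ h)
      rw [if_neg hpA]
      refine tendsto_const_nhds.congr' ?_
      filter_upwards [hT0 p hp hpI] with k hk
      rw [hk, mul_zero]
  have hAsub : A ⊆ c.support := (Finset.filter_subset _ _).trans hAIsub
  -- the limit gradient
  set h : Fin n → ℂ := fun i => ∑ p ∈ A, Q c m0 p a0 i with hh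
  have hH : ∀ i, Tendsto (fun k => ((Real.exp (- d k) * (l k * ‖z k i‖ ^ 2) : ℝ) : ℂ)) U
      (nhds (h i)) := by
    intro i
    have h1 : ∀ k, ((Real.exp (- d k) * (l k * ‖z k i‖ ^ 2) : ℝ) : ℂ) =
        ∑ p ∈ c.support, ((p.1 i : ℂ) * (m k * (starRingEnd ℂ) ((Real.exp (- d k) : ℂ) * T c p (z k)))
          + (p.2 i : ℂ) * ((starRingEnd ℂ) (m k) * ((Real.exp (- d k) : ℂ) * T c p (z k)))) := by
      intro k
      rw [Complex.ofReal_mul, hl k i, Finset.mul_sum]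
      refine Finset.sum_congr rfl fun p _ => ?_
      unfold Q
      rw [map_mul, Complex.conj_ofReal]
      ring
    have h2 : h i = ∑ p ∈ c.support,
        ((p.1 i : ℂ) * (m0 * (starRingEnd ℂ) (if p ∈ A then T c p a0 else 0))
          + (p.2 i : ℂ) * ((starRingEnd ℂ) m0 * (if p ∈ A then T c p a0 else 0))) := by
      rw [hh]
      refine Eq.trans ?_ (Finset.sum_subset hAsub ?_)
      · refine Finset.sum_congr rfl fun p hp => ?_
        rw [if_pos hp]; rfl
      · intro p _ hp
        rw [if_neg hp]; simp
    rw [h2]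
    refine Tendsto.congr (fun k => (h1 k).symm) ?_
    refine tendsto_finsetSum _ fun p hp => ?_
    have hcm := (Complex.continuous_conj.tendsto _).comp hmlim
    have hct := (Complex.continuous_conj.tendsto _).comp (hlim p hp)
    exact ((hmlim.mul hct).const_mul _).add ((hcm.mul (hlim p hp)).const_mul _)
  have hR : ∀ i, Tendsto (fun k => Real.exp (- d k) * (l k * ‖z k i‖ ^ 2)) U
      (nhds (h i).re) := by
    intro i
    exact (Complex.continuous_re.tendsto _).comp (hH i)
  have him : ∀ i, (h i).im = 0 := by
    intro i
    refine tendsto_nhds_unique ((Complex.continuous_im.tendsto _).comp (hH i)) ?_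
    refine tendsto_const_nhds.congr fun k => ?_
    simp only [Function.comp_apply, Complex.ofReal_im]
  -- nondegeneracy
  have hcontra : ¬ ∀ i, (h i).re = 0 := by
    intro hre
    have h1 : ∀ᶠ k in (U : Filter ℕ), ∀ p ∈ AI, p ∉ A → ∑ i, w k i * suppPt p i < d k := by
      rw [Filter.eventually_all_finset]
      intro p hp
      by_cases hpA : p ∈ A
      · exact Eventually.of_forall fun k hk => absurd hpA hk
      · filter_upwards [(hAn p hp hpA).eventually (eventually_gt_atTop 0)] with k hk _
        linarith
    obtain ⟨k, hk⟩ := h1.exists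
    refine face c hnd q D hD hq I A hAsub ⟨p0, hp0A⟩ (w k) (d k) ?_ (fun p hp => hAd p hp k) ?_
      a0 ha0ne m0 ?_ (fun i => Complex.ext (hre i) (him i))
    · intro p hp
      exact (Finset.mem_filter.1 (Finset.filter_subset _ _ hp : p ∈ AI)).2
    · intro p hp hpA hpI
      exact hk p (Finset.mem_filter.2 ⟨hp, hpI⟩) hpA
    · rw [← norm_ne_zero_iff, hm0]; exact one_ne_zero
  rcases tri U d with ⟨t, hdt⟩ | hdt | hdt
  · -- bounded case
    have hd0 : ∀ k, d k = 0 := by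
      intro k
      have := hVw (suppPt p0) ⟨_, (hdt.add (hbr (suppPt p0))).congr fun k => ?_⟩ k
      · rw [← this]
        exact Finset.sum_congr rfl fun i _ => mul_comm _ _
      · simp only [hd, hw, ← Finset.sum_add_distrib]
        exact Finset.sum_congr rfl fun i _ => by ring
    have hR' : ∀ i, Tendsto (fun k => l k * ‖z k i‖ ^ 2) U (nhds (h i).re) := by
      intro i
      refine (hR i).congr fun k => ?_
      rw [hd0]; simp
    have hnon : Nonempty (Fin n) := by
      by_contra hemp
      rw [not_nonempty_iff] at hemp
      have := hq p0 (hAIsub hp0)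
      simp at this
      omega
    obtain ⟨i0, hi0⟩ : ∃ i0, ∀ᶠ k in (U : Filter ℕ), ∀ i, ‖z k i‖ ≤ ‖z k i0‖ := by
      choose g hg using fun k => Finite.exists_max (fun i => ‖z k i‖)
      obtain ⟨i0, hi0⟩ := pigeon U g
      refine ⟨i0, ?_⟩
      filter_upwards [hi0] with k hk i
      rw [← hk]; exact hg k i
    have hzi0 : Tendsto (fun k => ‖z k i0‖) U atTop := by
      refine tendsto_atTop_mono' _ ?_ hN
      filter_upwards [hi0] with k hk
      exact (pi_norm_le_iff_of_nonneg (norm_nonneg _)).2 hk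
    have hxi0 : Tendsto (fun k => x k i0) U atTop := Real.tendsto_log_atTop.comp hzi0
    have hwi0 : Tendsto (fun k => w k i0) U atTop := by
      refine (hxi0.atTop_add (hb i0).neg).congr fun k => ?_
      simp only [hw, sub_eq_add_neg]
    have hz0 : ∀ᶠ k in (U : Filter ℕ), z k i0 ≠ 0 := by
      filter_upwards [hzi0.eventually (eventually_gt_atTop 0)] with k hk
      exact norm_pos_iff.1 hk
    have hclaim : ∀ i, ∀ k, w k i * (h i).re = w k i0 * (h i).re := by
      intro i
      by_cases hiI : i ∈ I
      · have hzi : ∀ᶠ k in (U : Filter ℕ), z k i ≠ 0 := hiI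
        rcases tri U (fun k => x k i - x k i0) with ht | ht | ht
        · intro k
          have := hVw (fun j => (if j = i then 1 else 0) - (if j = i0 then 1 else 0)) (by
            simpa [sub_mul, Finset.sum_sub_distrib] using ht) k
          simp only [sub_mul, Finset.sum_sub_distrib, ite_mul, one_mul, zero_mul,
            Finset.sum_ite_eq', Finset.mem_univ, if_true] at this
          rw [sub_eq_zero.1 this]
        · exfalso
          obtain ⟨k, hk1, hk2, hk3⟩ :=
            ((ht.eventually (eventually_gt_atTop 0)).and (hi0.and hzi)).exists
          have := Real.log_le_log (norm_pos_iff.2 hk3) (hk2 i)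
          simp only [hx] at hk1
          linarith
        · have h0 : (h i).re = 0 := by
            refine tendsto_nhds_unique (hR' i) ?_
            have h1 := Real.tendsto_exp_atBot.comp ht
            have h2 := (hR' i0).mul (h1.pow 2)
            have h3 : (h i0).re * (0 : ℝ) ^ 2 = 0 := by simp
            rw [h3] at h2
            refine h2.congr' ?_
            filter_upwards [hzi, hz0] with k hk1 hk2
            simp only [Function.comp_apply]
            rw [Real.exp_sub, ← hnormz k i hk1, ← hnormz k i0 hk2]
            have := norm_ne_zero_iff.2 hk2
            field_simp
          intro k
          rw [h0]; simp
      · have h0 : (h i).re = 0 := by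
          refine tendsto_nhds_unique (hR' i) (tendsto_const_nhds.congr' ?_)
          filter_upwards [hgood] with k hk
          rw [(hk i).2 hiI]; simp
        intro k
        rw [h0]; simp
    have hsum : ∀ k, ∑ i, w k i * (h i).re = 0 := by
      intro k
      rw [hh]
      simp only
      rw [sum_Q_re]
      refine Finset.sum_eq_zero fun p hp => ?_
      rw [hAd p hp k, hd0]; simp
    have hsum0 : ∑ i, (h i).re = 0 := by
      obtain ⟨k, hk⟩ := (hwi0.eventually (eventually_gt_atTop 0)).exists
      have h1 := hsum k
      rw [Finset.sum_congr rfl fun i _ => hclaim i k, ← Finset.mul_sum] at h1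
      exact (mul_eq_zero.1 h1).resolve_left hk.ne'
    have hnn : ∀ i, 0 ≤ (h i).re * (h i0).re := by
      intro i
      refine ge_of_tendsto ((hR' i).mul (hR' i0)) (Eventually.of_forall fun k => ?_)
      have : l k * ‖z k i‖ ^ 2 * (l k * ‖z k i0‖ ^ 2) = (l k * ‖z k i‖ * ‖z k i0‖) ^ 2 := by ring
      rw [this]; positivity
    have hi00 : (h i0).re = 0 := by
      have h1 : ∑ i, (h i).re * (h i0).re = 0 := by
        rw [← Finset.sum_mul, hsum0, zero_mul]
      have h2 := (Finset.sum_eq_zero_iff_of_nonneg fun i _ => hnn i).1 h1 i0 (Finset.mem_univ _)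
      simpa using h2
    apply hcontra
    intro i
    have h1 : |(h i).re| ≤ |(h i0).re| := by
      refine le_of_tendsto_of_tendsto (hR' i).abs (hR' i0).abs ?_
      filter_upwards [hi0] with k hk
      rw [abs_mul, abs_mul, abs_of_nonneg (sq_nonneg ‖z k i‖), abs_of_nonneg (sq_nonneg ‖z k i0‖)]
      have := hk i
      gcongr
    rw [hi00, abs_zero] at h1
    exact abs_eq_zero.1 (le_antisymm h1 (abs_nonneg _))
  · -- large case
    apply hcontra
    intro i
    refine tendsto_nhds_unique (hR i) ?_
    have h1 := (Real.tendsto_exp_neg_atTop_nhds_zero.comp hdt).mul (hE.norm.const_mul (D : ℝ))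
    rw [zero_mul] at h1
    refine squeeze_zero_norm (fun k => ?_) h1
    rw [norm_mul, Real.norm_eq_abs, Real.norm_eq_abs, abs_of_pos (Real.exp_pos _)]
    exact mul_le_mul_of_nonneg_left
      (milnor_bound c q D hqpos hq (z k) (l k) (m k) (hm k) (hl k) i) (Real.exp_pos _).le
  · -- small case
    apply hv0
    refine tendsto_nhds_unique hE ?_
    have h1 := (Complex.continuous_ofReal.tendsto _).comp (Real.tendsto_exp_atBot.comp hdt)
    have h2 := h1.mul (tendsto_finsetSum _ hlim)
    rw [Complex.ofReal_zero, zero_mul] at h2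
    refine h2.congr fun k => ?_
    rw [eval_eq, Finset.mul_sum]
    refine Finset.sum_congr rfl fun p _ => ?_
    simp only [Function.comp_apply]
    rw [← mul_assoc, ← Complex.ofReal_mul, ← Real.exp_add]
    simp

end Mixed

/-- Corollary 4.5(2): a radial weighted-homogeneous Newton strongly
non-degenerate mixed polynomial has `S(f) ∪ f(Sing f) ⊆ {0}`. -/
theorem Sset_union_critvals_subset_zero {n : ℕ} (c : MixedCoeff n)
    (hsupp : c.support.Nonempty) (hwh : RadialWeightedHom c)
    (hnd : Mixed.NewtonStronglyNonDeg c) :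
    Mixed.Sset c ∪ Mixed.eval c '' Mixed.Sing c ⊆ {(0 : ℂ)} := by
  obtain ⟨q, D, hqpos, _, hD, hq⟩ := hwh
  rintro v (hv | ⟨z, hz, rfl⟩)
  · exact Mixed.Sset_zero c hnd q D hD hqpos hq v hv
  · exact Mixed.crit_zero c hnd q D hD hq z hz
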